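/- Let Ω, Ω' be bounded open subsets of ℝⁿ and let c satisfy conditions A0, A1, A2. Let φ be c-convex on Ω and let (φ_k) be a sequence of c-convex potentials converging to φ uniformly on compact subsets of Ω. If x₀ ∈ Ω, y ∈ Ω' and p = −∇ₓc(x₀,y) ∈ ∂φ(x₀), then there exist sequences x_k → x₀ in Ω and y_k → y in cl(Ω') such that p_k := −∇ₓc(x_k,y_k) ∈ ∂φ_k(x_k) for all large k; in particular p_k → p. -/

import Mathlib

open Set Filter Topology MeasureTheory Metric Bornology
open scoped RealInnerProductSpace ENNReal NNReal Topology

noncomputable section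

/-- Euclidean space ℝⁿ. -/
abbrev Euc (n : ℕ) := EuclideanSpace ℝ (Fin n)

variable {n : ℕ}

/-- Gradient of the cost in the first variable: ∇ₓc(x,y). -/
noncomputable def gradx (c : Euc n → Euc n → ℝ) (x y : Euc n) : Euc n :=
  gradient (fun x' => c x' y) x

/-- Gradient of the cost in the second variable: ∇_y c(x,y). -/
noncomputable def grady (c : Euc n → Euc n → ℝ) (x y : Euc n) : Euc n :=
  gradient (fun y' => c x y') y

/-- Condition A0: the cost is C⁴ on a neighborhood of cl(Ω) × cl(Ω'). -/
def CondA0 (c : Euc n → Euc n → ℝ) (Ω Ω' : Set (Euc n)) : Prop :=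
  ∃ U : Set (Euc n × Euc n), IsOpen U ∧ closure Ω ×ˢ closure Ω' ⊆ U ∧
    ContDiffOn ℝ 4 (fun p => c p.1 p.2) U

/-- Condition A1: for every x ∈ cl(Ω), y ↦ −∇ₓc(x,y) is injective on cl(Ω') with convex image. -/
def CondA1 (c : Euc n → Euc n → ℝ) (Ω Ω' : Set (Euc n)) : Prop :=
  ∀ x ∈ closure Ω, Set.InjOn (fun y => -gradx c x y) (closure Ω') ∧
    Convex ℝ ((fun y => -gradx c x y) '' closure Ω')

/-- Condition A2: det D²ₓᵧ c (x,y) ≠ 0 on cl(Ω) × cl(Ω'). -/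
def CondA2 (c : Euc n → Euc n → ℝ) (Ω Ω' : Set (Euc n)) : Prop :=
  ∀ x ∈ closure Ω, ∀ y ∈ closure Ω',
    LinearMap.det ((fderiv ℝ (fun y' => gradx c x y') y : Euc n →L[ℝ] Euc n) :
      Euc n →ₗ[ℝ] Euc n) ≠ 0

/-- c-transform φᶜ(y) = sup_{x ∈ Ω} (−c(x,y) − φ(x)). -/
def ctransform (c : Euc n → Euc n → ℝ) (Ω : Set (Euc n)) (φ : Euc n → ℝ) (y : Euc n) : ℝ :=
  sSup ((fun x => -c x y - φ x) '' Ω)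

/-- c*-transform ψᶜ*(x) = sup_{y ∈ Ω'} (−c(x,y) − ψ(y)). -/
def cstarTransform (c : Euc n → Euc n → ℝ) (Ω' : Set (Euc n)) (ψ : Euc n → ℝ) (x : Euc n) : ℝ :=
  sSup ((fun y => -c x y - ψ y) '' Ω')

/-- φ is c-convex on Ω: it is the c*-transform of some lower semicontinuous ψ on Ω'. -/
def CConvexOn (c : Euc n → Euc n → ℝ) (Ω Ω' : Set (Euc n)) (φ : Euc n → ℝ) : Prop :=
  ∃ ψ : Euc n → ℝ, LowerSemicontinuousOn ψ Ω' ∧ ∀ x ∈ Ω, φ x = cstarTransform c Ω' ψ x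

/-- The contact set G_φ(x) = { y ∈ Ω' : φ(x) + φᶜ(y) = −c(x,y) }. -/
def contactSet (c : Euc n → Euc n → ℝ) (Ω Ω' : Set (Euc n)) (φ : Euc n → ℝ) (x : Euc n) :
    Set (Euc n) :=
  {y | y ∈ Ω' ∧ φ x + ctransform c Ω φ y = -c x y}

/-- The subdifferential ∂φ(x) (relative to Ω): p with φ(x') ≥ φ(x) + p·(x'−x) + o(|x'−x|). -/
def subdiff (Ω : Set (Euc n)) (φ : Euc n → ℝ) (x : Euc n) : Set (Euc n) :=
  {p | ∀ ε > (0:ℝ), ∀ᶠ x' in 𝓝[Ω] x, φ x + ⟪p, x' - x⟫ - ε * ‖x' - x‖ ≤ φ x'}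

/-- The c-subdifferential ∂ᶜφ(x) = { −∇ₓc(x,y) : y ∈ G_φ(x) }. -/
def csubdiff (c : Euc n → Euc n → ℝ) (Ω Ω' : Set (Euc n)) (φ : Euc n → ℝ) (x : Euc n) :
    Set (Euc n) :=
  (fun y => -gradx c x y) '' contactSet c Ω Ω' φ x

/-- S is c-convex with respect to the point x: −∇ₓc(x,S) is convex. -/
def CConvexSetWrt (c : Euc n → Euc n → ℝ) (x : Euc n) (S : Set (Euc n)) : Prop :=
  Convex ℝ ((fun y => -gradx c x y) '' S)

/-- S is c-convex with respect to the set Ω. -/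
def CConvexSet (c : Euc n → Euc n → ℝ) (Ω S : Set (Euc n)) : Prop :=
  ∀ x ∈ Ω, CConvexSetWrt c x S

/-- T is a c-exponential map for c on Ω × Ω': T x (−∇ₓc(x,y)) = y. -/
def IsCExp (c : Euc n → Euc n → ℝ) (Ω Ω' : Set (Euc n)) (T : Euc n → Euc n → Euc n) : Prop :=
  ∀ x ∈ Ω, ∀ y ∈ Ω', T x (-gradx c x y) = y

/-- The point y_θ of the c-segment [y₀,y₁]ₓ with respect to x. -/
def cseg (c : Euc n → Euc n → ℝ) (T : Euc n → Euc n → Euc n) (x y₀ y₁ : Euc n) (θ : ℝ) :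
    Euc n :=
  T x ((1 - θ) • (-gradx c x y₀) + θ • (-gradx c x y₁))

/-- The cost-sectional curvature 𝔖_c(x₀,y₀)(ξ,ν). -/
def costSecCurv (c : Euc n → Euc n → ℝ) (T : Euc n → Euc n → Euc n) (x₀ y₀ ξ ν : Euc n) : ℝ :=
  iteratedDeriv 2 (fun s : ℝ => iteratedDeriv 2
    (fun t : ℝ => -c (x₀ + t • ξ) (T x₀ (-gradx c x₀ y₀ + s • ν))) (0:ℝ)) (0:ℝ)

/-- Condition As (with constant C₀; C₀ = 0 gives condition Aw). -/
def CondAs (c : Euc n → Euc n → ℝ) (T : Euc n → Euc n → Euc n) (Ω Ω' : Set (Euc n))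
    (C₀ : ℝ) : Prop :=
  ∀ x ∈ Ω, ∀ y ∈ Ω', ∀ ξ ν : Euc n, ⟪ξ, ν⟫ = 0 →
    C₀ * ‖ξ‖ ^ 2 * ‖ν‖ ^ 2 ≤ costSecCurv c T x y ξ ν

/-- G_{φ#}μ₀ = μ₁ : some Borel selection of G_φ pushes μ₀ forward to μ₁. -/
def GradPush (c : Euc n → Euc n → ℝ) (Ω Ω' : Set (Euc n)) (φ : Euc n → ℝ)
    (μ₀ μ₁ : Measure (Euc n)) : Prop :=
  ∃ Tm : Euc n → Euc n, Measurable Tm ∧ (∀ᵐ x ∂μ₀, Tm x ∈ contactSet c Ω Ω' φ x) ∧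
    μ₀.map Tm = μ₁

/-- Ω' is uniformly strictly c-convex with respect to Ω. -/
def UnifStrictCConvex (c : Euc n → Euc n → ℝ) (Ω Ω' : Set (Euc n)) : Prop :=
  ∃ δ > (0:ℝ), ∀ x ∈ Ω, ∀ p ∈ (fun y => -gradx c x y) '' Ω',
    ∀ q ∈ (fun y => -gradx c x y) '' Ω',
      closedBall (midpoint ℝ p q) (δ * ‖p - q‖ ^ 2) ⊆ (fun y => -gradx c x y) '' Ω'

/-- Ω is uniformly strictly c*-convex with respect to Ω' (the dual statement). -/
def UnifStrictCstarConvex (c : Euc n → Euc n → ℝ) (Ω Ω' : Set (Euc n)) : Prop :=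
  ∃ δ > (0:ℝ), ∀ y ∈ Ω', ∀ p ∈ (fun x => -grady c x y) '' Ω,
    ∀ q ∈ (fun x => -grady c x y) '' Ω,
      closedBall (midpoint ℝ p q) (δ * ‖p - q‖ ^ 2) ⊆ (fun x => -grady c x y) '' Ω

/-- Ω has smooth boundary: it is the sublevel set of a smooth function with
nonvanishing gradient on the boundary. -/
def SmoothBoundary (Ω : Set (Euc n)) : Prop :=
  ∃ f : Euc n → ℝ, ContDiff ℝ (⊤ : ℕ∞) f ∧ Ω = f ⁻¹' Iio 0 ∧ ∀ x ∈ frontier Ω, gradient f x ≠ 0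

end

open InnerProductSpace in
lemma aux_subdiff {n : ℕ} (Ω : Set (Euc n)) (φ h : Euc n → ℝ) (x g : Euc n)
    (hh : HasGradientAt h g x)
    (hmin : ∀ᶠ x' in 𝓝 x, φ x + h x ≤ φ x' + h x') : -g ∈ subdiff Ω φ x := by
  intro ε hε
  apply mem_nhdsWithin_of_mem_nhds
  have h1 := (hasGradientAt_iff_isLittleO.1 hh).def hε
  filter_upwards [hmin, h1] with x' h2 h3
  rw [inner_neg_left]
  rw [Real.norm_eq_abs] at h3
  have := (abs_le.1 h3).2
  linarith

lemma aux_min {n : ℕ} (Ω : Set (Euc n)) (hΩo : IsOpen Ω) (f φ : Euc n → ℝ)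
    (hf : ∀ x ∈ Ω, DifferentiableAt ℝ f x)
    (φs : ℕ → Euc n → ℝ) (hφs : ∀ k, LowerSemicontinuousOn (φs k) Ω)
    (hconv : ∀ K : Set (Euc n), K ⊆ Ω → IsCompact K →
      TendstoUniformlyOn (fun k => φs k) φ atTop K)
    (x₀ : Euc n) (hx₀ : x₀ ∈ Ω) (hp : -gradient f x₀ ∈ subdiff Ω φ x₀)
    (ε : ℝ) (hε : 0 < ε) :
    ∀ᶠ k in atTop, ∃ x ∈ Ω, dist x x₀ < ε ∧
      ∃ q ∈ subdiff Ω (φs k) x, ‖q + gradient f x‖ < ε := by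
  have he : 0 < ε / 16 := by positivity
  have h1 := (hasGradientAt_iff_isLittleO.1 (hf x₀ hx₀).hasGradientAt).def he
  have h2 := hp (ε / 16) he
  rw [hΩo.nhdsWithin_eq hx₀] at h2
  have h3 : ∀ᶠ x in 𝓝 x₀, x ∈ Ω ∧ φ x₀ + f x₀ - ε / 8 * ‖x - x₀‖ ≤ φ x + f x := by
    filter_upwards [h1, h2, hΩo.mem_nhds hx₀] with x a1 a2 a3
    refine ⟨a3, ?_⟩
    rw [inner_neg_left] at a2
    rw [Real.norm_eq_abs] at a1
    have := (abs_le.1 a1).1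
    linarith
  obtain ⟨ρ, hρ, hρs⟩ := Metric.eventually_nhds_iff.1 h3
  set r := min (ρ / 2) (ε / 2) with hr
  have hr0 : 0 < r := by positivity
  have hrρ : r < ρ := lt_of_le_of_lt (min_le_left _ _) (by linarith)
  have hrε : r < ε := lt_of_le_of_lt (min_le_right _ _) (by linarith)
  have hB : ∀ x ∈ closedBall x₀ r, x ∈ Ω ∧ φ x₀ + f x₀ - ε / 8 * ‖x - x₀‖ ≤ φ x + f x :=
    fun x hx => hρs (lt_of_le_of_lt (mem_closedBall.1 hx) hrρ)
  have hBΩ : closedBall x₀ r ⊆ Ω := fun x hx => (hB x hx).1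
  have hK : IsCompact (closedBall x₀ r) := isCompact_closedBall _ _
  have hu := Metric.tendstoUniformlyOn_iff.1 (hconv _ hBΩ hK) (ε * r / 32) (by positivity)
  filter_upwards [hu] with k hk
  set a := ε / (4 * r) with ha
  have ha0 : 0 < a := by positivity
  set h : Euc n → ℝ := fun x => f x + a * ‖x - x₀‖ ^ 2 with hh
  have hgr : ∀ x ∈ Ω, HasGradientAt h (gradient f x + (2 * a) • (x - x₀)) x := by
    intro x hx
    rw [hasGradientAt_iff_hasFDerivAt]
    have t1 := (hf x hx).hasGradientAt.hasFDerivAt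
    have t2 := (((hasFDerivAt_id x).sub_const x₀).norm_sq).const_mul a
    refine (t1.add t2).congr_fderiv ?_
    ext v
    simp [inner_add_left, inner_smul_left]
    ring
  have hls : LowerSemicontinuousOn (fun x => φs k x + h x) (closedBall x₀ r) := by
    refine ((hφs k).mono hBΩ).add ?_
    apply ContinuousOn.lowerSemicontinuousOn
    intro x hx
    exact (hgr x (hBΩ hx)).continuousAt.continuousWithinAt
  obtain ⟨x, hx, hxm⟩ := hls.exists_isMinOn ⟨x₀, mem_closedBall_self hr0.le⟩ hK
  have hxlt : ‖x - x₀‖ < r := by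
    by_contra hcon
    have hxr : ‖x - x₀‖ = r := le_antisymm (by simpa [dist_eq_norm] using hx) (not_lt.1 hcon)
    have m1 : φs k x + h x ≤ φs k x₀ + h x₀ := hxm (mem_closedBall_self hr0.le)
    have m2 := (hB x hx).2
    have m3 := hk x hx
    have m4 := hk x₀ (mem_closedBall_self hr0.le)
    rw [Real.dist_eq] at m3 m4
    have m5 := (abs_lt.1 m3).2
    have m6 := (abs_lt.1 m4).1
    have m7 : a * r ^ 2 = ε * r / 4 := by rw [ha]; field_simp
    simp only [hh, hxr, m7, sub_self, norm_zero] at m1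
    rw [hxr] at m2
    have : 0 < ε * r := by positivity
    norm_num at m1
    linarith
  have hxΩ := hBΩ hx
  refine ⟨x, hxΩ, by rw [dist_eq_norm]; linarith, -(gradient f x + (2 * a) • (x - x₀)), ?_, ?_⟩
  · apply aux_subdiff Ω (φs k) h x _ (hgr x hxΩ)
    have : closedBall x₀ r ∈ 𝓝 x :=
      mem_of_superset (isOpen_ball.mem_nhds (by simpa [dist_eq_norm] using hxlt))
        ball_subset_closedBall
    filter_upwards [this] with x' hx'
    exact hxm hx'
  · have : -(gradient f x + (2 * a) • (x - x₀)) + gradient f x = -((2 * a) • (x - x₀)) := by abel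
    rw [this, norm_neg, norm_smul, Real.norm_eq_abs, abs_of_pos (by positivity)]
    have m7 : 2 * a * r = ε / 2 := by rw [ha]; field_simp; norm_num
    have : 2 * a * ‖x - x₀‖ ≤ 2 * a * r := by gcongr
    linarith

lemma aux_lsc {n : ℕ} (Ω Ω' : Set (Euc n)) (hΩb : IsBounded Ω) (hΩ'b : IsBounded Ω')
    (c : Euc n → Euc n → ℝ) (hc : ContinuousOn (fun p : Euc n × Euc n => c p.1 p.2)
      (closure Ω ×ˢ closure Ω'))
    (hne : Ω'.Nonempty) (φ : Euc n → ℝ) (hφ : CConvexOn c Ω Ω' φ) :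
    LowerSemicontinuousOn φ Ω := by
  obtain ⟨ψ, -, hψ⟩ := hφ
  have hcomp : IsCompact (closure Ω ×ˢ closure Ω') :=
    hΩb.isCompact_closure.prod hΩ'b.isCompact_closure
  obtain ⟨M, hM⟩ := hcomp.exists_bound_of_continuousOn hc
  have hM' : ∀ x ∈ Ω, ∀ y ∈ Ω', |c x y| ≤ M := fun x hx y hy =>
    hM (x, y) ⟨subset_closure hx, subset_closure hy⟩
  have key : LowerSemicontinuousOn (cstarTransform c Ω' ψ) Ω := by
    by_cases hb : BddAbove ((fun y => -ψ y) '' Ω')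
    · obtain ⟨B, hB⟩ := hb
      have : cstarTransform c Ω' ψ = fun x => ⨆ y : Ω', (-c x y - ψ y) := by
        funext x
        simp only [cstarTransform, sSup_image']
      rw [this]
      apply lowerSemicontinuousOn_ciSup
      · intro x hx
        refine ⟨M + B, ?_⟩
        rintro _ ⟨y, rfl⟩
        have h1 := (abs_le.1 (hM' x hx y y.2)).1
        have h2 : -ψ y ≤ B := hB ⟨y, y.2, rfl⟩
        simp only
        linarith
      · intro y
        apply ContinuousOn.lowerSemicontinuousOn
        apply ContinuousOn.sub _ continuousOn_const
        apply ContinuousOn.neg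
        exact hc.comp (f := fun x => (x, (y : Euc n))) (by fun_prop)
          (fun x hx => ⟨subset_closure hx, subset_closure y.2⟩)
    · have : ∀ x ∈ Ω, cstarTransform c Ω' ψ x = 0 := by
        intro x hx
        apply Real.sSup_of_not_bddAbove
        rintro ⟨B, hB⟩
        apply hb
        refine ⟨B + M, ?_⟩
        rintro _ ⟨y, hy, rfl⟩
        have h1 := (abs_le.1 (hM' x hx y hy)).2
        have h2 : -c x y - ψ y ≤ B := hB ⟨y, hy, rfl⟩
        simp only
        linarith
      exact (continuousOn_const.congr this).lowerSemicontinuousOn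
  intro x hx z hz
  rw [hψ x hx] at hz
  filter_upwards [key x hx z hz, self_mem_nhdsWithin] with x' h1 h2
  rw [hψ x' h2]
  exact h1

lemma aux_seq {X : Type*} [PseudoMetricSpace X] (z : X) (P : ℕ → X → Prop)
    (h : ∀ ε > 0, ∀ᶠ k in atTop, ∃ w, dist w z < ε ∧ P k w) :
    ∃ w : ℕ → X, Tendsto w atTop (𝓝 z) ∧ (∀ k, w k = z ∨ P k (w k)) ∧
      ∀ᶠ k in atTop, P k (w k) := by
  have hex : ∀ k : ℕ, ∃ w : X, (w = z ∨ P k w) ∧ ((∃ w, P k w) → P k w ∧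
      dist z w < infDist z {w | P k w} + 1 / ((k : ℝ) + 1)) := by
    intro k
    by_cases hk : ∃ w, P k w
    · have hpos : (0:ℝ) < 1 / ((k : ℝ) + 1) := by positivity
      obtain ⟨w, hw, hd⟩ := (infDist_lt_iff (s := {w | P k w}) (x := z) hk).1
        (lt_add_of_pos_right _ hpos)
      exact ⟨w, Or.inr hw, fun _ => ⟨hw, hd⟩⟩
    · exact ⟨z, Or.inl rfl, fun h => absurd h hk⟩
  choose w hw1 hw2 using hex
  refine ⟨w, ?_, hw1, ?_⟩
  · rw [Metric.tendsto_nhds]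
    intro ε hε
    have h1 : ∀ᶠ k : ℕ in atTop, 1 / ((k : ℝ) + 1) < ε / 2 :=
      tendsto_one_div_add_atTop_nhds_zero_nat.eventually (gt_mem_nhds (by positivity))
    filter_upwards [h (ε / 2) (by positivity), h1] with k ⟨v, hv, hPv⟩ hk
    have h2 := (hw2 k ⟨v, hPv⟩).2
    have h3 : infDist z {w | P k w} ≤ dist z v := infDist_le_dist_of_mem hPv
    rw [dist_comm] at hv ⊢
    linarith
  · filter_upwards [h 1 one_pos] with k ⟨v, _, hv⟩
    exact (hw2 k ⟨v, hv⟩).1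

/-- The x-gradient is C¹ jointly. -/
lemma aux_grad {n : ℕ} (c : Euc n → Euc n → ℝ) (U : Set (Euc n × Euc n)) (hU : IsOpen U)
    (hc : ContDiffOn ℝ 4 (fun p => c p.1 p.2) U) (z : Euc n × Euc n) (hz : z ∈ U) :
    ContDiffAt ℝ 1 (fun p : Euc n × Euc n => gradx c p.1 p.2) z := by
  have h1 : ContDiffAt ℝ 1 (fun p : Euc n × Euc n => (InnerProductSpace.toDual ℝ (Euc n)).symm
      ((fderiv ℝ (fun p : Euc n × Euc n => c p.1 p.2) p).comp
        (ContinuousLinearMap.inl ℝ (Euc n) (Euc n)))) z := by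
    have h2 : ContDiffAt ℝ 1 (fderiv ℝ (fun p : Euc n × Euc n => c p.1 p.2)) z :=
      (hc.contDiffAt (hU.mem_nhds hz)).fderiv_right (by norm_num)
    have h3 := h2.clm_comp (contDiffAt_const (c := ContinuousLinearMap.inl ℝ (Euc n) (Euc n)))
    exact (InnerProductSpace.toDual ℝ (Euc n)).symm.contDiff.contDiffAt.comp z h3
  apply h1.congr_of_eventuallyEq
  filter_upwards [hU.mem_nhds hz] with p hp
  unfold gradx gradient
  congr 1
  have h4 : HasFDerivAt (fun p : Euc n × Euc n => c p.1 p.2) _ (p.1, p.2) :=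
    ((hc.contDiffAt (hU.mem_nhds hp)).differentiableAt (by norm_num)).hasFDerivAt
  have h5 : HasFDerivAt (fun e : Euc n => (e, p.2)) (ContinuousLinearMap.inl ℝ (Euc n) (Euc n)) p.1 :=
    hasFDerivAt_prodMk_left p.1 p.2
  exact (HasFDerivAt.comp (f := fun e : Euc n => (e, p.2)) p.1 h4 h5).fderiv

/-- stability of subgradients under locally uniform convergence of c-convex
potentials. If p = −∇ₓc(x₀,y) ∈ ∂φ(x₀) and φ_k → φ uniformly on compact subsets of Ω,
then there are x_k → x₀ in Ω and y_k → y in cl(Ω') with −∇ₓc(x_k,y_k) ∈ ∂φ_k(x_k) for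
large k; in particular −∇ₓc(x_k,y_k) → p. -/
theorem stmt_8 {n : ℕ} (Ω Ω' : Set (Euc n))
    (hΩo : IsOpen Ω) (hΩb : IsBounded Ω) (hΩ'o : IsOpen Ω') (hΩ'b : IsBounded Ω')
    (c : Euc n → Euc n → ℝ)
    (hA0 : CondA0 c Ω Ω') (hA1 : CondA1 c Ω Ω') (hA2 : CondA2 c Ω Ω')
    (φ : Euc n → ℝ) (hφ : CConvexOn c Ω Ω' φ)
    (φs : ℕ → Euc n → ℝ) (hφs : ∀ k, CConvexOn c Ω Ω' (φs k))
    (hconv : ∀ K : Set (Euc n), K ⊆ Ω → IsCompact K →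
      TendstoUniformlyOn (fun k => φs k) φ atTop K)
    (x₀ : Euc n) (hx₀ : x₀ ∈ Ω) (y : Euc n) (hy : y ∈ Ω')
    (hp : -gradx c x₀ y ∈ subdiff Ω φ x₀) :
    ∃ (xs ys : ℕ → Euc n),
      Tendsto xs atTop (𝓝 x₀) ∧ Tendsto ys atTop (𝓝 y) ∧
      (∀ k, xs k ∈ Ω) ∧ (∀ k, ys k ∈ closure Ω') ∧
      (∀ᶠ k in atTop, -gradx c (xs k) (ys k) ∈ subdiff Ω (φs k) (xs k)) ∧
      Tendsto (fun k => -gradx c (xs k) (ys k)) atTop (𝓝 (-gradx c x₀ y)) := by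
  obtain ⟨U, hU, hsub, hcU⟩ := hA0
  have hmem : ∀ x ∈ Ω, ∀ z ∈ Ω', (x, z) ∈ U := fun x hx z hz =>
    hsub ⟨subset_closure hx, subset_closure hz⟩
  have hlsc : ∀ k, LowerSemicontinuousOn (φs k) Ω := fun k =>
    aux_lsc Ω Ω' hΩb hΩ'b c (hcU.continuousOn.mono hsub) ⟨y, hy⟩ _ (hφs k)
  have hf : ∀ x ∈ Ω, DifferentiableAt ℝ (fun x' => c x' y) x := by
    intro x hx
    have h4 : DifferentiableAt ℝ (fun p : Euc n × Euc n => c p.1 p.2) (x, y) :=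
      (hcU.contDiffAt (hU.mem_nhds (hmem x hx y hy))).differentiableAt (by norm_num)
    have h5 : DifferentiableAt ℝ (fun e : Euc n => (e, y)) x := by fun_prop
    exact DifferentiableAt.comp (f := fun e : Euc n => (e, y)) x h4 h5
  set F : Euc n × Euc n → Euc n := fun p => gradx c p.1 p.2 with hF
  have hFC : ContDiffAt ℝ 1 F (x₀, y) := aux_grad c U hU hcU _ (hmem x₀ hx₀ y hy)
  have hFs := hFC.hasStrictFDerivAt (by norm_num)
  set F' := fderiv ℝ F (x₀, y) with hF'
  have hFy : fderiv ℝ (fun y' => gradx c x₀ y') y =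
      F'.comp (ContinuousLinearMap.inr ℝ (Euc n) (Euc n)) :=
    (hFs.hasFDerivAt.comp y (hasFDerivAt_prodMk_right x₀ y)).fderiv
  have hdet := hA2 x₀ (subset_closure hx₀) y (subset_closure hy)
  rw [hFy] at hdet
  set L := F'.comp (ContinuousLinearMap.inr ℝ (Euc n) (Euc n)) with hL
  have hLs : Function.Surjective L := by
    have := LinearEquiv.ofIsUnitDet (f := (L : Euc n →ₗ[ℝ] Euc n)) (v := Module.finBasis ℝ (Euc n))
      (v' := Module.finBasis ℝ (Euc n)) (by
        rw [LinearMap.det_toMatrix]; exact isUnit_iff_ne_zero.2 hdet)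
    have h2 : IsUnit (L : Euc n →ₗ[ℝ] Euc n) :=
      (LinearMap.isUnit_iff_isUnit_det _).2 (isUnit_iff_ne_zero.2 hdet)
    exact ((Module.End.isUnit_iff _).1 h2).2
  have hG : HasStrictFDerivAt (fun p : Euc n × Euc n => (p.1, F p))
      ((ContinuousLinearMap.fst ℝ (Euc n) (Euc n)).prod F') (x₀, y) :=
    hasStrictFDerivAt_fst.prodMk hFs
  have hmap := hG.map_nhds_eq_of_surj (by
    rw [eq_top_iff]
    rintro ⟨a, b⟩ -
    obtain ⟨v, hv⟩ := hLs (b - F' (a, 0))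
    refine ⟨(a, v), ?_⟩
    have : F' (a, v) = F' (a, 0) + F' (0, v) := by rw [← map_add]; simp
    have hv' : F' (0, v) = b - F' (a, 0) := by simpa [hL] using hv
    simp [this, hv'])
  have hFcont : ContinuousAt F (x₀, y) := hFC.continuousAt
  obtain ⟨w, hw1, hw2, hw3⟩ := aux_seq (x₀, y)
    (fun k (w : Euc n × Euc n) => w.1 ∈ Ω ∧ w.2 ∈ Ω' ∧ -gradx c w.1 w.2 ∈ subdiff Ω (φs k) w.1) (by
    intro δ hδ
    have hV : (fun p : Euc n × Euc n => (p.1, F p)) '' (ball (x₀, y) δ ∩ Ω ×ˢ Ω') ∈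
        𝓝 (x₀, F (x₀, y)) := by
      rw [← hmap]
      exact image_mem_map (inter_mem (ball_mem_nhds _ hδ)
        ((hΩo.prod hΩ'o).mem_nhds ⟨hx₀, hy⟩))
    obtain ⟨η, hη, hηs⟩ := Metric.mem_nhds_iff.1 hV
    have hc1 : ContinuousAt (fun x => F (x, y)) x₀ :=
      ContinuousAt.comp (f := fun x => (x, y)) (g := F) hFcont (by fun_prop)
    obtain ⟨ρ, hρ, hρs⟩ := Metric.continuousAt_iff.1 hc1 (η / 2) (by positivity)
    have hm := aux_min Ω hΩo (fun x' => c x' y) φ hf φs hlsc hconv x₀ hx₀ hp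
      (min ρ (η / 2)) (by positivity)
    filter_upwards [hm] with k hk
    obtain ⟨x, hxΩ, hxd, q, hq, hqn⟩ := hk
    have hin : (x, -q) ∈ ball (x₀, F (x₀, y)) η := by
      rw [mem_ball, Prod.dist_eq]
      apply max_lt
      · have := min_le_right ρ (η / 2)
        simp only
        linarith
      · have h1 := hρs (lt_of_lt_of_le hxd (min_le_left _ _))
        have h2 : dist (-q) (F (x, y)) < η / 2 := by
          rw [dist_eq_norm, ← norm_neg]
          have : -(-q - F (x, y)) = q + gradient (fun x' => c x' y) x := by
            simp [hF, gradx, add_comm]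
          rw [this]
          exact lt_of_lt_of_le hqn (min_le_right _ _)
        have := dist_triangle (-q) (F (x, y)) (F (x₀, y))
        simp only at h1 ⊢
        linarith
    obtain ⟨⟨a, b⟩, ⟨hab1, hab2⟩, hab3⟩ := hηs hin
    simp only [Prod.mk.injEq] at hab3
    obtain ⟨rfl, hab4⟩ := hab3
    refine ⟨(a, b), hab1, hab2.1, hab2.2, ?_⟩
    have : -gradx c a b = q := by
      have : gradx c a b = -q := hab4
      rw [this, neg_neg]
    simpa only [this] using hq)
  have ht := (Prod.tendsto_iff w (x₀, y)).1 hw1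
  refine ⟨fun k => (w k).1, fun k => (w k).2, ht.1, ht.2, ?_, ?_, ?_, ?_⟩
  · intro k
    rcases hw2 k with h | h
    · simpa [h] using hx₀
    · exact h.1
  · intro k
    rcases hw2 k with h | h
    · simpa [h] using subset_closure hy
    · exact subset_closure h.2.1
  · filter_upwards [hw3] with k hk using hk.2.2
  · exact (hFcont.tendsto.comp hw1).neg
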